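/- Under the setup below, fix t ∈ [0,T] and let u(t,·,·) : closure(G) × [0,π] → ℝ be continuously differentiable in y with u(t,·,·), u_y(t,·,·) ∈ L²(D). Then, with h defined from u by the quotient formula in the setup, |∫_D f(t,x,y) h(t,x) u(t,x,y) dx dy| ≤ (1/(2‖ω′‖²)) ( ‖a(t,·)‖²_{L²(G)} + 2 ‖ω‖² ‖g(t,·,·,0)‖²_{L²(D)} ) + ( ℓ₀² ‖ω‖²/‖ω′‖² + (3/2) f_M² ‖ω′‖² ) ‖u(t,·,·)‖²_{L²(D)} + (1/2) ‖u_y(t,·,·)‖²_{L²(D)}. -/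

import Mathlib

/-!
The estimate holds slice by slice in `x` and is then integrated over `G`. For fixed `x ∈ G`, let `N` be
the numerator of `h`. The bound on `f` gives `|f h| ≤ (f_M/√π) |N|`, and Cauchy–Schwarz on `(0,π)` gives
`∫ |u| ≤ √π ‖u‖`, so that `|∫ f h u dy| ≤ f_M |N| ‖u‖`. The three terms of `N` are bounded by `|a|`,
by `‖ω‖ ‖|g(·,0)| + ℓ₀|u|‖` and by `‖u_y‖ ‖ω'‖`; each product with `f_M ‖u‖` is split by Young's inequality
`f_M k m ≤ k²/(2‖ω'‖²) + f_M² ‖ω'‖² m²/2`, which produces exactly the stated constants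
(`slice_bound`). The slice bound is integrable in `x` by Fubini, which gives the theorem without any
measurability requirement on `h`.
-/

open MeasureTheory Real

/-- The `L²(0,π)` inner product `(p,q) = ∫_0^π p q dy`. -/
noncomputable def l2ip (p q : ℝ → ℝ) : ℝ := ∫ y in Set.Ioo (0:ℝ) π, p y * q y

/-- The squared `L²(0,π)` norm `‖p‖² = ∫_0^π p² dy`. -/
noncomputable def l2sq (p : ℝ → ℝ) : ℝ := ∫ y in Set.Ioo (0:ℝ) π, (p y) ^ 2

/-- A function continuous on `[0,π]` is integrable on `(0,π)`. -/
lemma integrableOn_Ioo_of_cont {p : ℝ → ℝ} (hp : ContinuousOn p (Set.Icc 0 π)) :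
    IntegrableOn p (Set.Ioo 0 π) :=
  (hp.integrableOn_compact isCompact_Icc).mono_set Set.Ioo_subset_Icc_self

/-- Cauchy–Schwarz in `L²(0,π)`, from the discriminant of `s ↦ ‖s p + q‖²`. -/
lemma l2ip_sq_le {p q : ℝ → ℝ} (hp : ContinuousOn p (Set.Icc 0 π))
    (hq : ContinuousOn q (Set.Icc 0 π)) : (l2ip p q) ^ 2 ≤ l2sq p * l2sq q := by
  have hpp := integrableOn_Ioo_of_cont (hp.pow 2)
  have hqq := integrableOn_Ioo_of_cont (hq.pow 2)
  have hpq := integrableOn_Ioo_of_cont (hp.mul hq)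
  have key : ∀ s : ℝ, 0 ≤ l2sq p * (s * s) + (2 * l2ip p q) * s + l2sq q := by
    intro s
    have h0 : 0 ≤ ∫ y in Set.Ioo (0:ℝ) π, (s * p y + q y) ^ 2 :=
      integral_nonneg fun y => sq_nonneg _
    have h1 : ∫ y in Set.Ioo (0:ℝ) π, (s * p y + q y) ^ 2
        = ∫ y in Set.Ioo (0:ℝ) π, ((s * s) * (p y) ^ 2 + (2 * s) * (p y * q y) + (q y) ^ 2) := by
      congr 1; ext y; ring
    rw [h1, integral_add, integral_add, integral_const_mul, integral_const_mul] at h0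
    · unfold l2sq l2ip; linarith
    · exact hpp.const_mul _
    · exact hpq.const_mul _
    · exact (hpp.const_mul _).add (hpq.const_mul _)
    · exact hqq
  have h := discrim_le_zero key
  unfold discrim at h
  nlinarith

/-- The numerical core of the slice estimate: Young's inequality applied to the three terms of the
numerator. Here `m` stands for `∫ |u| / √π`, and `A`, `B`, `C` bound the three terms. -/
lemma young_combine {F W Ω L m U G0 V N A B C : ℝ} (hF : 0 < F) (hW : 0 < W) (hm0 : 0 ≤ m)
    (hm : m ^ 2 ≤ U) (hN : N ≤ A + B + C) (hB : B ^ 2 ≤ Ω * (2 * G0 + 2 * L ^ 2 * U))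
    (hC : C ^ 2 ≤ V * W) :
    F * N * m ≤ 1 / (2 * W) * (A ^ 2 + 2 * Ω * G0)
      + (L ^ 2 * Ω / W + 3 / 2 * F ^ 2 * W) * U + 1 / 2 * V := by
  have young : ∀ k : ℝ, F * k * m ≤ k ^ 2 / (2 * W) + F ^ 2 * W * U / 2 := by
    intro k
    have h1 : F ^ 2 * W * m ^ 2 ≤ F ^ 2 * W * U := by gcongr
    have h2 : 0 ≤ (k - F * W * m) ^ 2 / (2 * W) := by positivity
    have h3 : (k - F * W * m) ^ 2 / (2 * W)
        = k ^ 2 / (2 * W) - F * k * m + F ^ 2 * W * m ^ 2 / 2 := by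
      field_simp; ring
    linarith
  have hB' : B ^ 2 / (2 * W) ≤ Ω * (2 * G0 + 2 * L ^ 2 * U) / (2 * W) := by gcongr
  have hC' : C ^ 2 / (2 * W) ≤ V * W / (2 * W) := by gcongr
  have h4 : F * N * m ≤ F * (A + B + C) * m := by gcongr
  have h5 : 1 / (2 * W) * (A ^ 2 + 2 * Ω * G0)
      + (L ^ 2 * Ω / W + 3 / 2 * F ^ 2 * W) * U + 1 / 2 * V
      = A ^ 2 / (2 * W) + Ω * (2 * G0 + 2 * L ^ 2 * U) / (2 * W) + V * W / (2 * W)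
        + 3 * (F ^ 2 * W * U / 2) := by
    field_simp; ring
  have hA1 := young A
  have hB1 := young B
  have hC1 := young C
  rw [h5]
  nlinarith

/-- The estimate on one slice: `f`, `γ`, `v`, `v'` are `f(t,x,·)`, `g(t,x,·,·)`, `u(t,x,·)`,
`u_y(t,x,·)` for a fixed `x`, and `α = a(t,x)`. -/
lemma slice_bound {ω ω' f v v' : ℝ → ℝ} {γ : ℝ → ℝ → ℝ} {f_M ℓ₀ α : ℝ}
    (hω : ContinuousOn ω (Set.Icc 0 π)) (hω' : ContinuousOn ω' (Set.Icc 0 π))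
    (hW : 0 < l2sq ω') (hfM : 0 < f_M)
    (hne : l2ip f ω ≠ 0)
    (hbd : ∀ y ∈ Set.Icc (0:ℝ) π, |f y| ≤ (f_M / Real.sqrt π) * |l2ip f ω|)
    (hγ : ContinuousOn (fun y => γ y 0) (Set.Icc 0 π))
    (hlip : ∀ y ∈ Set.Icc (0:ℝ) π, ∀ r s : ℝ, |γ y r - γ y s| ≤ ℓ₀ * |r - s|)
    (hv : ContinuousOn v (Set.Icc 0 π)) (hv' : ContinuousOn v' (Set.Icc 0 π)) :
    |∫ y in Set.Ioo (0:ℝ) π,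
        f y * ((α - l2ip (fun y => γ y (v y)) ω + l2ip v' ω') / l2ip f ω) * v y|
      ≤ 1 / (2 * l2sq ω') * (α ^ 2 + 2 * l2sq ω * l2sq (fun y => γ y 0))
        + (ℓ₀ ^ 2 * l2sq ω / l2sq ω' + 3 / 2 * f_M ^ 2 * l2sq ω') * l2sq v
        + 1 / 2 * l2sq v' := by
  set N : ℝ := α - l2ip (fun y => γ y (v y)) ω + l2ip v' ω' with hN
  set q : ℝ → ℝ := fun y => |γ y 0| + ℓ₀ * |v y| with hq
  have hqc : ContinuousOn q (Set.Icc 0 π) := hγ.abs.add (hv.abs.const_mul ℓ₀)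
  have hsπ : 0 < Real.sqrt π := Real.sqrt_pos.mpr Real.pi_pos
  have hM := l2ip_sq_le hv.abs (continuousOn_const (c := (1:ℝ)))
  have hM0 : 0 ≤ l2ip (fun y => |v y|) (fun _ => 1) :=
    integral_nonneg fun y => by simp
  have h1π : l2sq (fun _ => (1:ℝ)) = π := by
    simp [l2sq, Real.pi_pos.le]
  have hvabs : l2sq (fun y => |v y|) = l2sq v := by simp [l2sq]
  have hωabs : l2sq (fun y => |ω y|) = l2sq ω := by simp [l2sq]
  have hΩ : 0 ≤ l2sq ω := integral_nonneg fun y => sq_nonneg _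
  have hI : |∫ y in Set.Ioo (0:ℝ) π, f y * (N / l2ip f ω) * v y|
      ≤ f_M * |N| * (l2ip (fun y => |v y|) (fun _ => 1) / Real.sqrt π) := by
    have h := norm_integral_le_of_norm_le (μ := volume.restrict (Set.Ioo (0:ℝ) π))
      (f := fun y => f y * (N / l2ip f ω) * v y)
      (g := fun y => (f_M / Real.sqrt π * |N|) * (|v y| * 1))
      (((integrableOn_Ioo_of_cont (hv.abs.mul (continuousOn_const (c := (1:ℝ)))))).const_mul _)
      ((ae_restrict_iff' measurableSet_Ioo).mpr (Filter.Eventually.of_forall fun y hy => by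
        have hb := hbd y (Set.Ioo_subset_Icc_self hy)
        have hp : 0 < |l2ip f ω| := abs_pos.mpr hne
        rw [Real.norm_eq_abs, abs_mul, abs_mul, abs_div, mul_one]
        refine mul_le_mul_of_nonneg_right ?_ (abs_nonneg _)
        calc |f y| * (|N| / |l2ip f ω|)
            ≤ (f_M / Real.sqrt π * |l2ip f ω|) * (|N| / |l2ip f ω|) := by gcongr
          _ = f_M / Real.sqrt π * |N| := by field_simp))
    rw [integral_const_mul, Real.norm_eq_abs] at h
    refine h.trans (le_of_eq ?_)
    unfold l2ip
    ring
  have hg : |l2ip (fun y => γ y (v y)) ω| ≤ l2ip q (fun y => |ω y|) := by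
    unfold l2ip
    rw [← Real.norm_eq_abs]
    refine norm_integral_le_of_norm_le (integrableOn_Ioo_of_cont (hqc.mul hω.abs))
      ((ae_restrict_iff' measurableSet_Ioo).mpr (Filter.Eventually.of_forall fun y hy => ?_))
    rw [Real.norm_eq_abs, abs_mul]
    have h := hlip y (Set.Ioo_subset_Icc_self hy) (v y) 0
    rw [sub_zero] at h
    have h2 := abs_sub_abs_le_abs_sub (γ y (v y)) (γ y 0)
    have h3 : |γ y (v y)| ≤ q y := by simp only [hq]; linarith
    gcongr
  have hqsq : l2sq q ≤ 2 * l2sq (fun y => γ y 0) + 2 * ℓ₀ ^ 2 * l2sq v := by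
    have i1 : IntegrableOn (fun y => 2 * (γ y 0) ^ 2) (Set.Ioo 0 π) :=
      (integrableOn_Ioo_of_cont (hγ.pow 2)).const_mul 2
    have i2 : IntegrableOn (fun y => 2 * ℓ₀ ^ 2 * (v y) ^ 2) (Set.Ioo 0 π) :=
      (integrableOn_Ioo_of_cont (hv.pow 2)).const_mul (2 * ℓ₀ ^ 2)
    unfold l2sq
    rw [← integral_const_mul, ← integral_const_mul, ← integral_add i1 i2]
    refine integral_mono (integrableOn_Ioo_of_cont (hqc.pow 2)) (i1.add i2) fun y => ?_
    simp only [hq]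
    rw [← sq_abs (γ y 0), ← sq_abs (v y)]
    nlinarith [sq_nonneg (|γ y 0| - ℓ₀ * |v y|)]
  have hB : (l2ip q (fun y => |ω y|)) ^ 2
      ≤ l2sq ω * (2 * l2sq (fun y => γ y 0) + 2 * ℓ₀ ^ 2 * l2sq v) := by
    have h := l2ip_sq_le hqc hω.abs
    rw [hωabs] at h
    nlinarith
  have hC : |l2ip v' ω'| ^ 2 ≤ l2sq v' * l2sq ω' := by
    rw [sq_abs]; exact l2ip_sq_le hv' hω'
  have hNle : |N| ≤ |α| + l2ip q (fun y => |ω y|) + |l2ip v' ω'| := by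
    have h1 := abs_add_le (α - l2ip (fun y => γ y (v y)) ω) (l2ip v' ω')
    have h2 := abs_sub α (l2ip (fun y => γ y (v y)) ω)
    linarith
  have hm : (l2ip (fun y => |v y|) (fun _ => 1) / Real.sqrt π) ^ 2 ≤ l2sq v := by
    rw [div_pow, Real.sq_sqrt Real.pi_pos.le, div_le_iff₀ Real.pi_pos]
    rwa [h1π, hvabs] at hM
  have hfin := young_combine hfM hW (div_nonneg hM0 hsπ.le) hm hNle hB hC
  rw [sq_abs] at hfin
  exact hI.trans hfin

/-- A priori bound on `∫_D f h u`, where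
`h(t,x) = [a(t,x) - (g(t,x,·,u(t,x,·)),ω) + (u_y(t,x,·),ω')] / (f(t,x,·),ω)`:
`|∫_D f h u| ≤ (1/(2‖ω'‖²))(‖a‖²_{L²(G)} + 2‖ω‖²‖g(·,0)‖²_{L²(D)})
  + (ℓ₀²‖ω‖²/‖ω'‖² + (3/2) f_M²‖ω'‖²)‖u‖²_{L²(D)} + (1/2)‖u_y‖²_{L²(D)}`. -/
theorem fh_u_integral_bound
    (T : ℝ) (hT : 0 < T) (n : ℕ) (hn : 1 ≤ n)
    (G : Set (Fin n → ℝ)) (hGopen : IsOpen G) (hGbdd : Bornology.IsBounded G)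
    -- ω ∈ C¹([0,π]) with ω(0) = ω(π) = 0 and ‖ω'‖ > 0
    (ω ω' : ℝ → ℝ)
    (hω_diff : ∀ y ∈ Set.Icc (0:ℝ) π, HasDerivAt ω (ω' y) y)
    (hω'_cont : ContinuousOn ω' (Set.Icc 0 π))
    (hω0 : ω 0 = 0) (hωπ : ω π = 0)
    (hω'_pos : 0 < l2sq ω')
    (f_M ℓ₀ : ℝ) (hfM : 0 < f_M) (hℓ₀ : 0 < ℓ₀)
    -- f continuous, (f(t,x,·),ω) ≠ 0, |f| ≤ (f_M/√π)|(f(t,x,·),ω)|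
    (f : ℝ → (Fin n → ℝ) → ℝ → ℝ)
    (hf_cont : ContinuousOn (fun p : ℝ × (Fin n → ℝ) × ℝ => f p.1 p.2.1 p.2.2)
      (Set.Icc 0 T ×ˢ closure G ×ˢ Set.Icc 0 π))
    (hf_ne : ∀ t ∈ Set.Icc (0:ℝ) T, ∀ x ∈ closure G, l2ip (f t x) ω ≠ 0)
    (hf_bd : ∀ t ∈ Set.Icc (0:ℝ) T, ∀ x ∈ closure G, ∀ y ∈ Set.Icc (0:ℝ) π,
      |f t x y| ≤ (f_M / Real.sqrt π) * |l2ip (f t x) ω|)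
    -- g continuous and ℓ₀-Lipschitz in the last variable
    (g : ℝ → (Fin n → ℝ) → ℝ → ℝ → ℝ)
    (hg_cont : ∀ u : ℝ, ContinuousOn (fun p : ℝ × (Fin n → ℝ) × ℝ => g p.1 p.2.1 p.2.2 u)
      (Set.Icc 0 T ×ˢ closure G ×ˢ Set.Icc 0 π))
    (hg_lip : ∀ t ∈ Set.Icc (0:ℝ) T, ∀ x ∈ closure G, ∀ y ∈ Set.Icc (0:ℝ) π,
      ∀ u v : ℝ, |g t x y u - g t x y v| ≤ ℓ₀ * |u - v|)
    -- a continuous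
    (a : ℝ → (Fin n → ℝ) → ℝ)
    (ha_cont : ContinuousOn (fun p : ℝ × (Fin n → ℝ) => a p.1 p.2)
      (Set.Icc 0 T ×ˢ closure G))
    -- fixed time t, u(t,·,·) continuously differentiable in y, u, u_y ∈ L²(D)
    (t : ℝ) (ht : t ∈ Set.Icc (0:ℝ) T)
    (u uy : (Fin n → ℝ) → ℝ → ℝ)
    (hu_diff : ∀ x ∈ closure G, ∀ y ∈ Set.Icc (0:ℝ) π, HasDerivAt (u x) (uy x y) y)
    (huy_cont : ∀ x ∈ closure G, ContinuousOn (uy x) (Set.Icc 0 π))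
    (hu_L2 : IntegrableOn (fun p : (Fin n → ℝ) × ℝ => (u p.1 p.2) ^ 2)
      (G ×ˢ Set.Ioo 0 π))
    (huy_L2 : IntegrableOn (fun p : (Fin n → ℝ) × ℝ => (uy p.1 p.2) ^ 2)
      (G ×ˢ Set.Ioo 0 π)) :
    |∫ x in G, ∫ y in Set.Ioo (0:ℝ) π,
        f t x y *
          ((a t x - l2ip (fun y => g t x y (u x y)) ω + l2ip (uy x) ω')
            / l2ip (f t x) ω) * u x y|
      ≤ (1 / (2 * l2sq ω')) *
          ((∫ x in G, (a t x) ^ 2)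
            + 2 * l2sq ω * ∫ x in G, ∫ y in Set.Ioo (0:ℝ) π, (g t x y 0) ^ 2)
        + (ℓ₀ ^ 2 * l2sq ω / l2sq ω' + (3 / 2) * f_M ^ 2 * l2sq ω') *
            (∫ x in G, ∫ y in Set.Ioo (0:ℝ) π, (u x y) ^ 2)
        + (1 / 2) * ∫ x in G, ∫ y in Set.Ioo (0:ℝ) π, (uy x y) ^ 2 := by
  have hGm : MeasurableSet G := hGopen.measurableSet
  have hcG : IsCompact (closure G) := hGbdd.isCompact_closure
  have hωc : ContinuousOn ω (Set.Icc 0 π) := fun y hy =>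
    (hω_diff y hy).continuousAt.continuousWithinAt
  -- Square-integrability on `D` passes to the iterated integral by Fubini.
  have fub : ∀ w : (Fin n → ℝ) → ℝ → ℝ,
      IntegrableOn (fun p : (Fin n → ℝ) × ℝ => (w p.1 p.2) ^ 2) (G ×ˢ Set.Ioo 0 π) →
      IntegrableOn (fun x => l2sq (w x)) G := by
    intro w hw
    rw [IntegrableOn, Measure.volume_eq_prod, ← Measure.prod_restrict] at hw
    exact hw.integral_prod_left
  have hg0c : ContinuousOn (fun p : (Fin n → ℝ) × ℝ => g t p.1 p.2 0)
      (closure G ×ˢ Set.Icc 0 π) :=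
    (hg_cont 0).comp (f := fun p : (Fin n → ℝ) × ℝ => (t, p)) (by fun_prop)
      fun p hp => ⟨ht, hp⟩
  have iA : IntegrableOn (fun x => (a t x) ^ 2) G := by
    have hac : ContinuousOn (fun x => a t x) (closure G) :=
      ha_cont.comp (f := fun x : Fin n → ℝ => (t, x)) (by fun_prop) fun x hx => ⟨ht, hx⟩
    exact ((hac.pow 2).integrableOn_compact hcG).mono_set subset_closure
  have iG : IntegrableOn (fun x => l2sq (fun y => g t x y 0)) G :=
    fub (fun x y => g t x y 0)
      (((hg0c.pow 2).integrableOn_compact (hcG.prod isCompact_Icc)).mono_set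
        (Set.prod_mono subset_closure Set.Ioo_subset_Icc_self))
  have iU := fub u hu_L2
  have iV := fub uy huy_L2
  have i1 := (iA.add (iG.const_mul (2 * l2sq ω))).const_mul (1 / (2 * l2sq ω'))
  have i2 := iU.const_mul (ℓ₀ ^ 2 * l2sq ω / l2sq ω' + (3 / 2) * f_M ^ 2 * l2sq ω')
  have i3 := iV.const_mul (1 / 2)
  have h := norm_integral_le_of_norm_le (μ := volume.restrict G)
    (f := fun x => ∫ y in Set.Ioo (0:ℝ) π,
        f t x y *
          ((a t x - l2ip (fun y => g t x y (u x y)) ω + l2ip (uy x) ω')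
            / l2ip (f t x) ω) * u x y)
    ((i1.add i2).add i3)
    ((ae_restrict_iff' hGm).mpr (Filter.Eventually.of_forall fun x hx => by
      have hx' := subset_closure hx
      exact slice_bound hωc hω'_cont hω'_pos hfM (hf_ne t ht x hx') (hf_bd t ht x hx')
        (hg0c.comp (f := fun y : ℝ => (x, y)) (by fun_prop) fun y hy => ⟨hx', hy⟩)
        (hg_lip t ht x hx')
        (fun y hy => (hu_diff x hx' y hy).continuousAt.continuousWithinAt)
        (huy_cont x hx')))
  rw [integral_add' (i1.add i2) i3, integral_add' i1 i2, integral_const_mul, integral_const_mul,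
    integral_const_mul] at h
  simp only [Pi.add_apply] at h
  rw [integral_add iA (iG.const_mul _), integral_const_mul] at h
  exact h
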